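/- arXiv:2208.03277 — 3 statements merged into one kernel-verified Lean document; each statement's English description precedes it below -/
import Mathlib

section
/- Let R be a (not necessarily commutative) ring and let t, d ∈ R satisfy d*t − t*d = 1. Set s = −d*t. Then for every integer m ≥ 1 one has d^m * t^m = (−1)^m • P_m(s), where P_m(x) = x(x−1)⋯(x−m+1) ∈ ℤ[x] is the descending factorial (descPochhammer) polynomial and P_m(s) denotes its evaluation at s via the canonical ring map ℤ[x] → R sending x to s (integers being central in R). -/
/-- If `d * t - t * d = 1`, then moving `d * t` to the right past `t ^ m` shifts it by `m`. -/
theorem mul_mul_pow_eq_pow_mul_add {R : Type*} [Ring R] {t d : R}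
    (h : d * t - t * d = 1) (m : ℕ) : d * t * t ^ m = t ^ m * (d * t + m) := by
  have shift : d * t * t = t * (d * t + 1) := by
    nth_rewrite 1 [sub_eq_iff_eq_add'.mp h]
    rw [add_mul, one_mul, mul_add, mul_one, mul_assoc]
  induction m with
  | zero => simp
  | succ m ih =>
    calc d * t * t ^ (m + 1) = d * t * t ^ m * t := by rw [pow_succ, mul_assoc _ (t ^ m)]
      _ = t ^ m * (d * t * t + m * t) := by rw [ih, mul_assoc, add_mul]
      _ = t ^ (m + 1) * (d * t + (m + 1 : ℕ)) := by
        rw [shift, Nat.cast_comm, ← mul_add, ← mul_assoc, ← pow_succ]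
        push_cast
        rw [add_assoc, add_comm (1 : R)]

/-- Lemma A.2: if `d*t - t*d = 1` and `s = -(d*t)`, then for every `m ≥ 1`,
`d^m * t^m = (-1)^m • (s*(s-1)*⋯*(s-m+1))`, the last factor being the evaluation at `s`
of the descending factorial polynomial `descPochhammer ℤ m`. -/
theorem pow_mul_pow_eq_descPochhammer {R : Type*} [Ring R] (t d : R)
    (h : d * t - t * d = 1) :
    ∀ m : ℕ, 1 ≤ m →
      d ^ m * t ^ m
        = (-1 : ℤ) ^ m • (Polynomial.aeval (-(d * t)) (descPochhammer ℤ m)) := by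
  intro m _
  clear * - h
  induction m with
  | zero => simp
  | succ m ih =>
    calc d ^ (m + 1) * t ^ (m + 1) = d ^ m * (d * t * t ^ m) := by
          rw [pow_succ, pow_succ']; simp only [mul_assoc]
      _ = d ^ m * t ^ m * (d * t + m) := by rw [mul_mul_pow_eq_pow_mul_add h, mul_assoc]
      _ = _ := by
        have neg_factor : d * t + m = -(-(d * t) - m) := by abel
        rw [ih, neg_factor, descPochhammer_succ_right, map_mul, map_sub, Polynomial.aeval_X,
          map_natCast, pow_succ, mul_neg_one, neg_smul, smul_mul_assoc, mul_neg, smul_neg]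
end

section
/- With the notation of the context, the map φ is equivariant for the derivation actions: for every ℂ-linear derivation D : R → R and every u ∈ B̃_g one has φ(D·u) = D·φ(u), where D acts on B̃_g and on B_f by the formulas given in the context. -/
noncomputable section

open Finsupp

/-- `B_f` modeled as the free `R`-module with basis `{e_β : β ∈ ℕ^d}`. -/
abbrev Bf (R : Type*) [CommRing R] (d : ℕ) : Type _ := (Fin d → ℕ) →₀ R

/-- `B̃_g` modeled as the free `R`-module with basis `{u_{α,j} : α ∈ ℕ^d, j ∈ ℤ}`. -/
abbrev Btil (R : Type*) [CommRing R] (d : ℕ) : Type _ := ((Fin d → ℕ) × ℤ) →₀ R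

variable (R : Type*) [CommRing R] [Algebra ℂ R] (d : ℕ) (f : Fin d → R)

/-- The `ℂ`-linear action of a derivation `D` on `B̃_g`:
`D(h u_{α,j}) = D(h) u_{α,j} - Σᵢ D(fᵢ) h u_{α+eᵢ,j+1}`. -/
def DActTil (D : Derivation ℂ R R) : Btil R d →ₗ[ℂ] Btil R d :=
  Finsupp.lsum ℂ fun p : (Fin d → ℕ) × ℤ =>
    ((Finsupp.lsingle p : R →ₗ[R] Btil R d).restrictScalars ℂ).comp D.toLinearMap
      - ∑ i : Fin d,
        ((Finsupp.lsingle (p.1 + Pi.single i 1, p.2 + 1) : R →ₗ[R] Btil R d).restrictScalars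
            ℂ).comp (LinearMap.mulLeft ℂ (D (f i)))

/-- The `ℂ`-linear action of a derivation `D` on `B_f`:
`D(h e_β) = D(h) e_β - Σᵢ D(fᵢ) h e_{β+eᵢ}`. -/
def DActF (D : Derivation ℂ R R) : Bf R d →ₗ[ℂ] Bf R d :=
  Finsupp.lsum ℂ fun β : Fin d → ℕ =>
    ((Finsupp.lsingle β : R →ₗ[R] Bf R d).restrictScalars ℂ).comp D.toLinearMap
      - ∑ i : Fin d,
        ((Finsupp.lsingle (β + Pi.single i 1) : R →ₗ[R] Bf R d).restrictScalars ℂ).comp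
          (LinearMap.mulLeft ℂ (D (f i)))

/-- The `R`-linear map `φ : B̃_g → B_f`, `φ(u_{α,j}) = e_α`. -/
def phi : Btil R d →ₗ[R] Bf R d :=
  Finsupp.lift (Bf R d) R ((Fin d → ℕ) × ℤ) fun p => Finsupp.single p.1 1

lemma phi_single {S : Type*} [CommRing S] (p : (Fin d → ℕ) × ℤ) (h : S) :
    phi S d (single p h) = single p.1 h := by
  simp [phi]

lemma DActTil_single (D : Derivation ℂ R R) (p : (Fin d → ℕ) × ℤ) (h : R) :
    DActTil R d f D (single p h) =
      single p (D h) - ∑ i, single (p.1 + Pi.single i 1, p.2 + 1) (D (f i) * h) := by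
  simp [DActTil]

lemma DActF_single (D : Derivation ℂ R R) (β : Fin d → ℕ) (h : R) :
    DActF R d f D (single β h) =
      single β (D h) - ∑ i, single (β + Pi.single i 1) (D (f i) * h) := by
  simp [DActF]

/-- Proposition 3.3 i): `φ` is equivariant for the derivation actions:
`φ(D·u) = D·φ(u)` for every `ℂ`-linear derivation `D` of `R` and every `u ∈ B̃_g`. -/
theorem phi_derivation_equivariant (D : Derivation ℂ R R) (x : Btil R d) :
    phi R d (DActTil R d f D x) = DActF R d f D (phi R d x) := by
  induction x using Finsupp.induction_linear with
  | zero => simp only [map_zero]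
  | add x y hx hy => simp only [map_add, hx, hy]
  | single p h => simp only [DActTil_single, phi_single, DActF_single, map_sub, map_sum]

end
end

section
/- With the notation of the context, for every m ∈ ℤ and every u ∈ B̃_g^{(m)} one has φ(s u) = (s − m)φ(u), i.e., φ(s u) = s(φ(u)) − m • φ(u), where s denotes the operator −∂_z∘z on B̃_g and the operator −Σᵢ ∂_{t_i}∘t_i on B_f. -/
noncomputable section

open Finsupp

variable (R : Type*) [CommRing R] [Algebra ℂ R] (d : ℕ) (f : Fin d → R)

/-- The operator `∂_z^k` : `h u_{α,j} ↦ h u_{α,j+k}`. -/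
def dz (k : ℤ) : Btil R d →ₗ[R] Btil R d :=
  Finsupp.lift (Btil R d) R ((Fin d → ℕ) × ℤ) fun p => Finsupp.single (p.1, p.2 + k) 1

/-- The operator `z` : `h u_{α,j} ↦ Σᵢ fᵢ h u_{α+eᵢ,j} - j h u_{α,j-1}`. -/
def zOp : Btil R d →ₗ[R] Btil R d :=
  Finsupp.lift (Btil R d) R ((Fin d → ℕ) × ℤ) fun p =>
    (∑ i : Fin d, f i • Finsupp.single (p.1 + Pi.single i 1, p.2) (1 : R))
      - p.2 • Finsupp.single (p.1, p.2 - 1) (1 : R)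

/-- The operator `s = -∂_z ∘ z` on `B̃_g`. -/
def sTil : Btil R d →ₗ[R] Btil R d := -((dz R d 1).comp (zOp R d f))

/-- The operator `∂_{t_i}` : `h e_β ↦ h e_{β+eᵢ}`. -/
def dtOp (i : Fin d) : Bf R d →ₗ[R] Bf R d :=
  Finsupp.lift (Bf R d) R (Fin d → ℕ) fun β => Finsupp.single (β + Pi.single i 1) 1

/-- The operator `t_i` : `h e_β ↦ fᵢ h e_β - βᵢ h e_{β-eᵢ}`. -/
def tOp (i : Fin d) : Bf R d →ₗ[R] Bf R d :=
  Finsupp.lift (Bf R d) R (Fin d → ℕ) fun β =>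
    f i • Finsupp.single β (1 : R) - (β i) • Finsupp.single (β - Pi.single i 1) (1 : R)

/-- The operator `s = -Σᵢ ∂_{t_i} ∘ t_i` on `B_f`. -/
def sF : Bf R d →ₗ[R] Bf R d := -∑ i : Fin d, (dtOp R d i).comp (tOp R d f i)

/-- The graded piece `B̃_g^{(m)}`, spanned over `R` by the `u_{α,|α|-m}`. -/
def gradedPiece (m : ℤ) : Submodule R (Btil R d) :=
  Submodule.span R
    {x : Btil R d | ∃ α : Fin d → ℕ, x = Finsupp.single (α, ((∑ i, α i : ℕ) : ℤ) - m) (1 : R)}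

section Basis

variable {R : Type*} [CommRing R] {d : ℕ} (f : Fin d → R)

lemma dz_single (k : ℤ) (α : Fin d → ℕ) (j : ℤ) :
    dz R d k (single (α, j) 1) = single (α, j + k) 1 := by
  simp [dz]

lemma zOp_single (α : Fin d → ℕ) (j : ℤ) :
    zOp R d f (single (α, j) 1) =
      (∑ i, f i • single (α + Pi.single i 1, j) (1 : R)) - j • single (α, j - 1) (1 : R) := by
  simp only [zOp, lift_apply, zero_smul, sum_single_index, one_smul]

lemma dtOp_single (i : Fin d) (β : Fin d → ℕ) :
    dtOp R d i (single β 1) = single (β + Pi.single i 1) 1 := by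
  simp [dtOp]

lemma tOp_single (i : Fin d) (β : Fin d → ℕ) :
    tOp R d f i (single β 1) =
      f i • single β (1 : R) - β i • single (β - Pi.single i 1) (1 : R) := by
  simp only [tOp, lift_apply, zero_smul, sum_single_index, one_smul]

lemma phi_single_s11 (α : Fin d → ℕ) (j : ℤ) :
    phi R d (single (α, j) 1) = single α 1 := by
  simp [phi]

lemma sTil_single (α : Fin d → ℕ) (j : ℤ) :
    sTil R d f (single (α, j) 1) =
      j • single (α, j) (1 : R) - ∑ i, f i • single (α + Pi.single i 1, j + 1) (1 : R) := by
  simp only [sTil, LinearMap.neg_apply, LinearMap.comp_apply, zOp_single, map_sub, map_sum,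
    map_smul, map_zsmul, dz_single, sub_add_cancel, neg_sub]

lemma dtOp_tOp_single (i : Fin d) (β : Fin d → ℕ) :
    dtOp R d i (tOp R d f i (single β 1)) =
      f i • single (β + Pi.single i 1) (1 : R) - β i • single β (1 : R) := by
  rw [tOp_single, map_sub, map_smul, map_nsmul, dtOp_single, dtOp_single]
  rcases Nat.eq_zero_or_pos (β i) with h | h
  · simp only [h, zero_smul]
  · rw [tsub_add_cancel_of_le]
    intro k
    rcases eq_or_ne k i with rfl | hk
    · rwa [Pi.single_eq_same]
    · simp [hk]

lemma sF_single (β : Fin d → ℕ) :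
    sF R d f (single β 1) =
      (∑ i, β i) • single β (1 : R) - ∑ i, f i • single (β + Pi.single i 1) (1 : R) := by
  simp only [sF, LinearMap.neg_apply, LinearMap.sum_apply, LinearMap.comp_apply, dtOp_tOp_single,
    Finset.sum_sub_distrib, neg_sub, Finset.sum_smul]

end Basis

/-- Proposition 3.3 v): for every `m ∈ ℤ` and `u ∈ B̃_g^{(m)}`,
`φ(s u) = s(φ(u)) - m • φ(u)`. -/
theorem phi_s (m : ℤ) (x : Btil R d) (hx : x ∈ gradedPiece R d m) :
    phi R d (sTil R d f x) = sF R d f (phi R d x) - m • phi R d x := by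
  induction hx using Submodule.span_induction with
  | mem x hx =>
    obtain ⟨α, rfl⟩ := hx
    simp only [sTil_single, phi_single_s11, sF_single, map_sub, map_sum, map_smul, map_zsmul,
      sub_smul, map_nsmul, natCast_zsmul]
    abel
  | zero => simp
  | add x y _ _ hx hy =>
    simp only [map_add, hx, hy, smul_add]
    abel
  | smul a x _ hx =>
    simp only [map_smul, hx, smul_sub, smul_comm a m]

end
end
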